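/- Let p be a prime with p ≡ 1 (mod 3), and write p = A² + 3B² with integers A, B and A ≡ 1 (mod 3). Then A = (1/2)·(3·V_p(x² + 2/x) + 1) − p and A = (1/2)·(3·V_p(x + 4/x²) + 1) − p; equivalently, V_p(x² + 2/x) = V_p(x + 4/x²) = (2p − 1 + 2A)/3. -/

import Mathlib

/-!
Two nonzero points `x ≠ y` have the same image under `x ↦ x² + c/x` exactly when
`x y (x + y) = c`. A fibre meeting this curve is the root set `{x, y, z}` of `t³ - b t + c`, and it
carries six solutions `(x, y)`, or three if two of the roots coincide; any other fibre is a
singleton and carries none. Either way the number of solutions plus `3` is three times the size of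
the fibre, so counting points on the curve determines the number of values. Solving
`x y (x + y) = c` as a quadratic in `y` expresses that count through `∑ χ(1 + 4 c s³)`, where `χ` is
the quadratic character, and `4 c = 2³` for `c = 2`.

The sum `S = ∑ χ(1 + s³)` equals `J + J̄` for the Jacobi sum `J` of `χ` with a cubic character.
Since `J J̄ = p` and `J - J̄` is an integer multiple of `√-3`, we get `4 p = S² + 3 d²`. As `S` is
even, uniqueness of the representation `p = A² + 3 B²` gives `S = ±2 A`, and `S ≡ 1 (mod 3)` fixes
the sign: `S = -2 A`.

The substitution `x ↦ c/x` turns `x² + c/x` into `x + c²/x²`.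
-/

open Finset

section PowerFibers

variable {F : Type*} [Field F]

lemma exists_isPrimitiveRoot_of_dvd_card_sub_one [Fintype F] {n : ℕ}
    (hn : n ∣ Fintype.card F - 1) : ∃ ζ : F, IsPrimitiveRoot ζ n := by
  classical
  rw [← Fintype.card_units, ← Nat.card_eq_fintype_card] at hn
  obtain ⟨m, hm⟩ := hn
  obtain ⟨g, hg⟩ := IsCyclic.exists_ofOrder_eq_natCard (α := Fˣ)
  have hg' : IsPrimitiveRoot (g : F) (n * m) := by
    rw [← hm, ← hg, IsPrimitiveRoot.coe_units_iff]
    exact IsPrimitiveRoot.orderOf g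
  exact ⟨(g : F) ^ m, hg'.pow (hm ▸ Nat.card_pos) (mul_comm n m)⟩

lemma ne_zero_of_dvd_card_sub_one [Fintype F] {n : ℕ} (hn : n ∣ Fintype.card F - 1) : n ≠ 0 :=
  ne_zero_of_dvd_ne_zero (Nat.sub_pos_of_lt Fintype.one_lt_card).ne' hn

lemma mulChar_apply_eq_one_iff_exists_pow_eq [Finite F] {R : Type*} [CommRing R]
    {ψ : MulChar F R} {a : F} (ha : a ≠ 0) :
    ψ a = 1 ↔ ∃ x : F, x ^ orderOf ψ = a := by
  constructor
  · intro h
    obtain ⟨g, hg⟩ := IsCyclic.exists_generator (α := Fˣ)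
    obtain ⟨k, hk⟩ := mem_powers_iff_mem_zpowers.mpr (hg (Units.mk0 a ha))
    have hk' : (g : F) ^ k = a := by simpa using congrArg Units.val hk
    have hψk : ψ ^ k = 1 := by
      rw [MulChar.eq_iff hg, MulChar.pow_apply_coe, ← map_pow, hk', h, MulChar.one_apply_coe]
    obtain ⟨m, rfl⟩ := orderOf_dvd_of_pow_eq_one hψk
    exact ⟨g ^ m, by rw [← pow_mul, mul_comm, hk']⟩
  · rintro ⟨x, rfl⟩
    have hx : IsUnit x := isUnit_iff_ne_zero.mpr (ne_zero_pow ψ.orderOf_pos.ne' ha)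
    rw [map_pow, ← MulChar.pow_apply' ψ ψ.orderOf_pos.ne', pow_orderOf_eq_one,
      MulChar.one_apply hx]

variable [Fintype F] {n : ℕ}

lemma card_filter_pow_eq [DecidableEq F] (hn : n ∣ Fintype.card F - 1) {a : F} (ha : a ≠ 0) :
    #{x : F | x ^ n = a} = if ∃ x : F, x ^ n = a then n else 0 := by
  obtain ⟨ζ, hζ⟩ := exists_isPrimitiveRoot_of_dvd_card_sub_one hn
  have hroots : ({x : F | x ^ n = a} : Finset F) = (Polynomial.nthRoots n a).toFinset := by
    ext x
    simp [Polynomial.mem_nthRoots (Nat.pos_of_ne_zero (ne_zero_of_dvd_card_sub_one hn))]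
  rw [hroots, Multiset.toFinset_card_of_nodup (hζ.nthRoots_nodup ha), hζ.card_nthRoots]
  congr

lemma sum_pow_eq_sum_card_nsmul [DecidableEq F] {M : Type*} [AddCommMonoid M] (f : F → M)
    (n : ℕ) : ∑ x, f (x ^ n) = ∑ a, #{x : F | x ^ n = a} • f a := by
  simp_rw [← sum_const]
  exact (sum_fiberwise' univ (· ^ n) f).symm

lemma dvd_sum_pow_sub {R : Type*} [CommRing R] (hn : n ∣ Fintype.card F - 1) (f : F → R) :
    (n : R) ∣ ∑ x, f (x ^ n) - f 0 := by
  let := Classical.decEq F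
  have hzero : #{x : F | x ^ n = 0} = 1 := by
    simp [ne_zero_of_dvd_card_sub_one hn, filter_eq']
  rw [sum_pow_eq_sum_card_nsmul, Fintype.sum_eq_add_sum_compl 0, hzero, one_smul,
    add_sub_cancel_left]
  refine dvd_sum fun a ha => ?_
  rw [card_filter_pow_eq hn (by simpa using ha)]
  split_ifs <;> simp

lemma card_filter_pow_orderOf_eq [DecidableEq F] {R : Type*} [CommRing R] [IsDomain R]
    (ψ : MulChar F R) (a : F) :
    (#{x : F | x ^ orderOf ψ = a} : R) = ∑ i ∈ range (orderOf ψ), ψ a ^ i := by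
  have hn0 : orderOf ψ ≠ 0 := ψ.orderOf_pos.ne'
  rcases eq_or_ne a 0 with rfl | ha
  · rw [MulChar.map_zero, zero_geom_sum, if_neg hn0]
    simp [hn0, filter_eq']
  rw [card_filter_pow_eq ψ.orderOf_dvd_card_sub_one ha]
  split_ifs with h
  · simp [(mulChar_apply_eq_one_iff_exists_pow_eq ha).mpr h]
  · have hψa : ψ a ≠ 1 := mt (mulChar_apply_eq_one_iff_exists_pow_eq ha).mp h
    have hpow : ψ a ^ orderOf ψ = 1 := by
      rw [← MulChar.pow_apply' ψ hn0, pow_orderOf_eq_one,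
        MulChar.one_apply (isUnit_iff_ne_zero.mpr ha)]
    have hgeom : (∑ i ∈ range (orderOf ψ), ψ a ^ i) * (ψ a - 1) = 0 := by
      rw [geom_sum_mul, hpow, sub_self]
    rw [Nat.cast_zero, (mul_eq_zero.mp hgeom).resolve_right (sub_ne_zero.mpr hψa)]

lemma sum_pow_orderOf_eq {R : Type*} [CommRing R] [IsDomain R] (ψ : MulChar F R) (f : F → R) :
    ∑ x, f (x ^ orderOf ψ) = ∑ i ∈ range (orderOf ψ), ∑ a, f a * ψ a ^ i := by
  let := Classical.decEq F
  simp_rw [sum_pow_eq_sum_card_nsmul, nsmul_eq_mul, card_filter_pow_orderOf_eq, sum_mul,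
    mul_comm (f _)]
  exact sum_comm

end PowerFibers

section JacobiSums

variable {F : Type*} [Field F]

lemma exists_sub_sq_eq_intCast_mul [Finite F] {R : Type*} [CommRing R] [IsDomain R]
    {ψ : MulChar F R} (hψ : ψ ^ 3 = 1) {ω : R} (hω : IsPrimitiveRoot ω 3) (u : F) :
    ∃ ε : ℤ, ψ u - ψ u ^ 2 = ε * (ω - ω ^ 2) := by
  rcases eq_or_ne u 0 with rfl | hu
  · exact ⟨0, by simp [MulChar.map_zero]⟩
  obtain ⟨k, hk, h⟩ := MulChar.exists_apply_eq_pow hψ hω hu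
  have hω3 := hω.pow_eq_one
  interval_cases k
  · exact ⟨0, by simp [h]⟩
  · exact ⟨1, by simp [h]⟩
  · exact ⟨-1, by rw [h]; push_cast; linear_combination -ω * hω3⟩

lemma sub_sq_sq_eq_neg_three {R : Type*} [CommRing R] [IsDomain R] {ω : R}
    (hω : IsPrimitiveRoot ω 3) : (ω - ω ^ 2) ^ 2 = -3 := by
  have h : 1 + ω + ω ^ 2 = 0 := by
    simpa [sum_range_succ] using hω.geom_sum_eq_zero (by norm_num)
  linear_combination (ω ^ 2 - 3 * ω + 3) * h

variable [Fintype F]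

lemma sum_one_add_mul_mulChar {R : Type*} [CommRing R] (χ φ : MulChar F R) :
    ∑ u, χ (1 + u) * φ u = φ (-1) * jacobiSum χ φ := by
  rw [jacobiSum, mul_sum, ← Equiv.sum_comp (Equiv.addLeft (1 : F)) fun x =>
    φ (-1) * (χ x * φ (1 - x))]
  refine sum_congr rfl fun u _ => ?_
  rw [Equiv.coe_addLeft, sub_add_cancel_left, mul_left_comm, ← map_mul, neg_mul_neg, one_mul]

lemma jacobiSum_eq_sum_of_odd {R : Type*} [CommRing R] (χ : MulChar F R) {φ : MulChar F R}
    {n : ℕ} (hn : Odd n) (hφ : φ ^ n = 1) : jacobiSum χ φ = ∑ u, χ (1 + u) * φ u := by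
  rw [sum_one_add_mul_mulChar, MulChar.val_neg_one_eq_one_of_odd_order hn hφ, one_mul]

lemma jacobiSum_inv_eq_sum_of_pow_three_eq_one {R : Type*} [CommRing R] (χ : MulChar F R)
    {ψ : MulChar F R} (hψ : ψ ^ 3 = 1) : jacobiSum χ ψ⁻¹ = ∑ u, χ (1 + u) * ψ u ^ 2 := by
  have hinv : ψ⁻¹ = ψ ^ 2 := inv_eq_of_mul_eq_one_right (by rw [← pow_succ', hψ])
  rw [jacobiSum_eq_sum_of_odd χ (n := 3) (by decide) (by rw [inv_pow, hψ, inv_one]), hinv]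
  simp only [MulChar.pow_apply' ψ two_ne_zero]

lemma sum_mulChar_one_add_cube {R : Type*} [CommRing R] [IsDomain R]
    {χ ψ : MulChar F R} (hχ : χ ≠ 1) (hψ : orderOf ψ = 3) :
    ∑ s, χ (1 + s ^ 3) = jacobiSum χ ψ + jacobiSum χ ψ⁻¹ := by
  have hψ3 : ψ ^ 3 = 1 := hψ ▸ pow_orderOf_eq_one ψ
  have hzero : ∑ u, χ (1 + u) = 0 := by
    rw [← MulChar.sum_eq_zero_of_ne_one hχ, ← Equiv.sum_comp (Equiv.addLeft (1 : F)) χ]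
    rfl
  have hsum := sum_pow_orderOf_eq ψ fun u => χ (1 + u)
  simp only [hψ, sum_range_succ, range_zero, sum_empty, zero_add, pow_zero, pow_one, mul_one,
    hzero] at hsum
  rw [hsum, jacobiSum_eq_sum_of_odd χ (by decide) hψ3,
    jacobiSum_inv_eq_sum_of_pow_three_eq_one χ hψ3]

lemma exists_jacobiSum_sub_jacobiSum_inv_eq {R : Type*} [CommRing R] [IsDomain R]
    (χ : MulChar F ℤ) {ψ : MulChar F R} (hψ : ψ ^ 3 = 1) {ω : R} (hω : IsPrimitiveRoot ω 3) :
    ∃ d : ℤ, jacobiSum (χ.ringHomComp (Int.castRingHom R)) ψ -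
      jacobiSum (χ.ringHomComp (Int.castRingHom R)) ψ⁻¹ = d * (ω - ω ^ 2) := by
  choose ε hε using exists_sub_sq_eq_intCast_mul hψ hω
  refine ⟨∑ u, χ (1 + u) * ε u, ?_⟩
  rw [jacobiSum_eq_sum_of_odd _ (by decide) hψ, jacobiSum_inv_eq_sum_of_pow_three_eq_one _ hψ,
    ← sum_sub_distrib, Int.cast_sum, sum_mul]
  refine sum_congr rfl fun u _ => ?_
  rw [← mul_sub, hε, Int.cast_mul, mul_assoc, MulChar.ringHomComp_apply, eq_intCast]

lemma jacobiSum_mul_jacobiSum_inv_of_isQuadratic {K : Type*} [Field K]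
    (hchar : ringChar K ≠ ringChar F) {χ ψ : MulChar F K} (hquad : χ.IsQuadratic) (hχ : χ ≠ 1)
    (hψ : ψ ^ 2 ≠ 1) : jacobiSum χ ψ * jacobiSum χ ψ⁻¹ = Fintype.card F := by
  have hψ1 : ψ ≠ 1 := by
    rintro rfl
    exact hψ (one_pow 2)
  have hχψ : χ * ψ ≠ 1 := by
    intro h
    rw [eq_inv_of_mul_eq_one_right h, hquad.inv, hquad.sq_eq_one] at hψ
    exact hψ rfl
  simpa only [hquad.inv] using jacobiSum_mul_jacobiSum_inv hchar hχ hψ1 hχψ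

variable [DecidableEq F]

theorem exists_four_mul_card_eq_sq_add_three_mul_sq (hF : ringChar F ≠ 2)
    (h3 : 3 ∣ Fintype.card F - 1) :
    ∃ d : ℤ, 4 * (Fintype.card F : ℤ) = (∑ s, quadraticChar F (1 + s ^ 3)) ^ 2 + 3 * d ^ 2 := by
  have hω : IsPrimitiveRoot _ 3 := Complex.isPrimitiveRoot_exp 3 three_ne_zero
  obtain ⟨ψ, hψ⟩ := MulChar.exists_mulChar_orderOf F h3 hω
  have hψ3 : ψ ^ 3 = 1 := hψ ▸ pow_orderOf_eq_one ψ
  have hψ2 : ψ ^ 2 ≠ 1 := fun h => absurd (orderOf_dvd_of_pow_eq_one h) (by rw [hψ]; decide)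
  have hchar : ringChar ℂ ≠ ringChar F := by
    rw [ringChar.eq_zero]
    exact (CharP.ringChar_ne_zero_of_finite F).symm
  let χ : MulChar F ℂ := (quadraticChar F).ringHomComp (Int.castRingHom ℂ)
  have hχ : χ ≠ 1 :=
    (MulChar.ringHomComp_ne_one_iff (RingHom.injective_int _)).mpr (quadraticChar_ne_one hF)
  obtain ⟨d, hsub⟩ := exists_jacobiSum_sub_jacobiSum_inv_eq (quadraticChar F) hψ3 hω
  have hmul : jacobiSum χ ψ * jacobiSum χ ψ⁻¹ = Fintype.card F :=
    jacobiSum_mul_jacobiSum_inv_of_isQuadratic hchar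
      ((quadraticChar_isQuadratic F).comp _) hχ hψ2
  have hadd : ((∑ s, quadraticChar F (1 + s ^ 3) : ℤ) : ℂ) = jacobiSum χ ψ + jacobiSum χ ψ⁻¹ := by
    rw [← sum_mulChar_one_add_cube hχ hψ, Int.cast_sum]
    rfl
  have hsq : (jacobiSum χ ψ - jacobiSum χ ψ⁻¹) ^ 2 = -3 * d ^ 2 := by
    rw [hsub, mul_pow, sub_sq_sq_eq_neg_three hω, mul_comm]
  refine ⟨d, ?_⟩
  rw [← Int.cast_inj (α := ℂ), Int.cast_add, Int.cast_pow, hadd]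
  push_cast
  linear_combination (-4) * hmul - hsq

lemma sum_quadraticChar_modEq_two {ι : Type*} [Fintype ι] (f : ι → F) :
    ∑ x, quadraticChar F (f x) ≡ #{x | f x ≠ 0} [ZMOD 2] := by
  rw [card_filter]
  push_cast
  refine Int.ModEq.sum fun x _ => ?_
  split_ifs with h
  · rcases quadraticChar_dichotomy h with h | h <;> rw [h]; decide
  · rw [not_not.mp h, quadraticChar_zero]

lemma sum_quadraticChar_one_add_cube_modEq_three (h3 : 3 ∣ Fintype.card F - 1) :
    ∑ s : F, quadraticChar F (1 + s ^ 3) ≡ 1 [ZMOD 3] := by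
  have hdvd := dvd_sum_pow_sub h3 fun s => quadraticChar F (1 + s)
  simp only [add_zero, map_one, Nat.cast_ofNat] at hdvd
  exact (Int.modEq_iff_dvd.mpr hdvd).symm

lemma even_sum_quadraticChar_one_add_cube (hF : ringChar F ≠ 2) (h3 : 3 ∣ Fintype.card F - 1) :
    Even (∑ s : F, quadraticChar F (1 + s ^ 3)) := by
  have hroots : #{s : F | 1 + s ^ 3 = 0} = 3 := by
    have hiff (s : F) : 1 + s ^ 3 = 0 ↔ s ^ 3 = -1 := by rw [add_comm, add_eq_zero_iff_eq_neg]
    simp_rw [hiff]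
    rw [card_filter_pow_eq h3 (neg_ne_zero.mpr one_ne_zero), if_pos ⟨-1, by norm_num⟩]
  have hcompl : #{s : F | 1 + s ^ 3 = 0} + #{s : F | 1 + s ^ 3 ≠ 0} = Fintype.card F :=
    card_filter_add_card_filter_not _
  have hodd := FiniteField.odd_card_of_char_ne_two hF
  have hmod := sum_quadraticChar_modEq_two fun s : F => 1 + s ^ 3
  rw [Int.even_iff, hmod]
  omega

end JacobiSums

lemma sq_eq_sq_of_prime_eq_sq_add_mul_sq {p n a b c d : ℤ} (hp : Prime p) (hn : 1 < n)
    (hab : p = a ^ 2 + n * b ^ 2) (hcd : p = c ^ 2 + n * d ^ 2) : a ^ 2 = c ^ 2 := by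
  have hp0 : 0 < p := lt_of_le_of_ne (by rw [hab]; positivity) hp.ne_zero.symm
  have hprod : p * (d ^ 2 - b ^ 2) = (a * d - b * c) * (a * d + b * c) := by
    linear_combination d ^ 2 * hab - b ^ 2 * hcd
  have eq_zero_of_dvd {x y : ℤ} (h : p ^ 2 = x ^ 2 + n * y ^ 2) (hy : p ∣ y) : y = 0 := by
    refine Int.eq_zero_of_abs_lt_dvd hy (sq_lt_sq₀ (abs_nonneg y) hp0.le |>.mp ?_)
    rw [sq_abs]
    by_contra! hle
    nlinarith [sq_nonneg x, sq_pos_of_pos hp0]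
  have hbrahmagupta : p ^ 2 = (a * c + n * b * d) ^ 2 + n * (a * d - b * c) ^ 2 := by
    linear_combination p * hab + (a ^ 2 + n * b ^ 2) * hcd
  have hbrahmagupta' : p ^ 2 = (a * c - n * b * d) ^ 2 + n * (a * d + b * c) ^ 2 := by
    linear_combination p * hab + (a ^ 2 + n * b ^ 2) * hcd
  have hzero : (a * d - b * c) * (a * d + b * c) = 0 := by
    rcases hp.dvd_or_dvd ⟨_, hprod.symm⟩ with h | h
    · rw [eq_zero_of_dvd hbrahmagupta h, zero_mul]
    · rw [eq_zero_of_dvd hbrahmagupta' h, mul_zero]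
  have hdb : d ^ 2 - b ^ 2 = 0 := (mul_eq_zero.mp (hprod.trans hzero)).resolve_left hp.ne_zero
  linear_combination hcd - hab + n * hdb

lemma mod_three_eq_one_of_eq_sq_add_three_mul_sq {n : ℕ} {a b : ℤ}
    (hab : (n : ℤ) = a ^ 2 + 3 * b ^ 2) (ha : a % 3 = 1) : n % 3 = 1 := by
  have hmod : (n : ℤ) ≡ 1 ^ 2 [ZMOD 3] := by
    rw [hab]
    exact Int.modEq_add_fac_self.trans (Int.ModEq.pow 2 ha)
  rw [Int.ModEq] at hmod
  omega

lemma ringChar_zmod_ne_of_mod_three_eq_one {n m : ℕ} (hn : n % 3 = 1) (hm : m % 3 ≠ 1) :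
    ringChar (ZMod n) ≠ m := by
  rw [ZMod.ringChar_zmod_n]
  rintro rfl
  exact hm hn

theorem sum_quadraticChar_one_add_cube {p : ℕ} [Fact p.Prime] {A B : ℤ}
    (hAB : (p : ℤ) = A ^ 2 + 3 * B ^ 2) (hA : A % 3 = 1) :
    ∑ s : ZMod p, quadraticChar (ZMod p) (1 + s ^ 3) = -2 * A := by
  have hp : p % 3 = 1 := mod_three_eq_one_of_eq_sq_add_three_mul_sq hAB hA
  have h3 : 3 ∣ Fintype.card (ZMod p) - 1 := by
    rw [ZMod.card]
    omega
  have hF : ringChar (ZMod p) ≠ 2 := ringChar_zmod_ne_of_mod_three_eq_one hp (by decide)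
  have hmod := sum_quadraticChar_one_add_cube_modEq_three h3
  obtain ⟨s, hs⟩ := (even_sum_quadraticChar_one_add_cube hF h3).two_dvd
  obtain ⟨d, hd⟩ := exists_four_mul_card_eq_sq_add_three_mul_sq hF h3
  rw [hs, Int.ModEq] at hmod
  rw [hs] at hd ⊢
  rw [ZMod.card] at hd
  obtain ⟨k, rfl⟩ : Even d := by
    have heven : Even (3 * d ^ 2) := ⟨2 * p - 2 * s ^ 2, by linarith⟩
    simpa [Int.even_mul, Int.even_pow, show ¬ Even (3 : ℤ) by decide] using heven
  have hsq : A ^ 2 = s ^ 2 := sq_eq_sq_of_prime_eq_sq_add_mul_sq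
    (Nat.prime_iff_prime_int.mp Fact.out) (by norm_num) hAB (d := k) (by linarith)
  rcases sq_eq_sq_iff_eq_or_eq_neg.mp hsq with rfl | rfl <;> omega

section SqAddDiv

lemma card_six_pairs_add_three {α : Type*} [DecidableEq α] {x y z : α} (h : ¬(x = y ∧ x = z)) :
    #({(x, y), (x, z), (y, x), (y, z), (z, x), (z, y)} : Finset (α × α)) + 3 =
      3 * #({x, y, z} : Finset α) := by
  by_cases hxy : x = y <;> by_cases hxz : x = z <;> by_cases hyz : y = z <;>
    simp_all [eq_comm]

variable {F : Type*} [Field F]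

/-- The rational function `x ^ 2 + c / x`, with the junk value `0` at `x = 0`. -/
def sqAddDiv (c x : F) : F := x ^ 2 + c / x

lemma sqAddDiv_eq_sqAddDiv_iff {c x y : F} (hx : x ≠ 0) (hy : y ≠ 0) :
    sqAddDiv c x = sqAddDiv c y ↔ x = y ∨ x * y * (x + y) = c := by
  have hsub : (sqAddDiv c x - sqAddDiv c y) * (x * y) = (x - y) * (x * y * (x + y) - c) := by
    unfold sqAddDiv
    field_simp
    ring
  rw [← sub_eq_zero, ← mul_eq_zero_iff_right (mul_ne_zero hx hy), hsub, mul_eq_zero, sub_eq_zero,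
    sub_eq_zero]

lemma mul_mul_add_eq_iff_eq_or_eq {c x y z t : F} (hc : c ≠ 0) (hsum : x + y + z = 0)
    (hprod : x * y * z = -c) : x * t * (x + t) = c ↔ t = y ∨ t = z := by
  have hx : x ≠ 0 := left_ne_zero_of_mul (left_ne_zero_of_mul (hprod ▸ neg_ne_zero.mpr hc))
  have hfactor : x * t * (x + t) - c = x * ((t - y) * (t - z)) := by
    linear_combination x * t * hsum - hprod
  rw [← sub_eq_zero, hfactor, mul_eq_zero_iff_left hx, mul_eq_zero, sub_eq_zero, sub_eq_zero]

lemma ne_zero_of_mul_mul_add_eq {c x y : F} (hc : c ≠ 0) (h : x * y * (x + y) = c) :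
    x ≠ 0 :=
  left_ne_zero_of_mul (left_ne_zero_of_mul (h ▸ hc))

variable [Fintype F] [DecidableEq F]

/-- The value set of `x ^ 2 + c / x` on nonzero `x`, whose size over `ZMod p` is `V_p(x² + c/x)`. -/
def sqAddDivValues (c : F) : Finset F := (univ.erase 0).image (sqAddDiv c)

lemma mem_sqAddDivValues {b c : F} :
    b ∈ sqAddDivValues c ↔ ∃ x ≠ 0, x ^ 3 + c = b * x := by
  simp only [sqAddDivValues, sqAddDiv, mem_image, mem_erase, mem_univ, and_true]
  refine exists_congr fun x => and_congr_right fun hx => ?_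
  rw [← mul_left_inj' hx, add_mul, div_mul_cancel₀ c hx, pow_succ x 2]

lemma mem_sqAddDivValues_iff_exists_mul_sq {b c : F} (hc : c ≠ 0) :
    b ∈ sqAddDivValues c ↔ ∃ x ≠ 0, x ^ 3 + c ^ 2 = b * x ^ 2 := by
  have subst_div {x : F} (hx : x ≠ 0) :
      (c / x) ^ 3 + c ^ 2 = b * (c / x) ^ 2 ↔ x ^ 3 + c = b * x := by
    field_simp
    rw [add_comm]
  rw [mem_sqAddDivValues]
  constructor
  · rintro ⟨x, hx, h⟩
    exact ⟨c / x, div_ne_zero hc hx, (subst_div hx).mpr h⟩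
  · rintro ⟨x, hx, h⟩
    refine ⟨c / x, div_ne_zero hc hx, (subst_div (div_ne_zero hc hx)).mp ?_⟩
    rwa [div_div_cancel₀ hc]

/-- The points of the curve `x * y * (x + y) = c`. If `c ≠ 0`, those with `x ≠ y` are the pairs of
distinct nonzero points identified by `sqAddDiv c`. Those with `x = y` are kept: then `x` is a
double root of the cubic `t ^ 3 + c = b * t` at `b = sqAddDiv c x`. -/
def collisionPairs (c : F) : Finset (F × F) := {q | q.1 * q.2 * (q.1 + q.2) = c}

lemma mem_collisionPairs {c : F} {q : F × F} :
    q ∈ collisionPairs c ↔ q.1 * q.2 * (q.1 + q.2) = c := by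
  simp [collisionPairs]

lemma filter_sqAddDiv_eq_of_collision {c x y z : F} (hc : c ≠ 0) (hsum : x + y + z = 0)
    (hprod : x * y * z = -c) :
    ({t ∈ univ.erase 0 | sqAddDiv c t = sqAddDiv c x} : Finset F) = {x, y, z} := by
  obtain ⟨⟨hx, hy⟩, hz⟩ : (x ≠ 0 ∧ y ≠ 0) ∧ z ≠ 0 := by
    simpa only [← hprod, mul_ne_zero_iff] using neg_ne_zero.mpr hc
  ext t
  simp only [mem_filter, mem_erase, mem_univ, and_true, mem_insert, mem_singleton]
  constructor
  · rintro ⟨ht, h⟩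
    rwa [eq_comm, sqAddDiv_eq_sqAddDiv_iff hx ht, mul_mul_add_eq_iff_eq_or_eq hc hsum hprod,
      eq_comm] at h
  · intro h
    have ht : t ≠ 0 := by rcases h with rfl | rfl | rfl <;> assumption
    rw [eq_comm (a := sqAddDiv c t), sqAddDiv_eq_sqAddDiv_iff hx ht,
      mul_mul_add_eq_iff_eq_or_eq hc hsum hprod, eq_comm (a := x)]
    exact ⟨ht, h⟩

lemma filter_collisionPairs_eq_of_collision {c x y z : F} (hc : c ≠ 0) (hsum : x + y + z = 0)
    (hprod : x * y * z = -c) :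
    {q ∈ collisionPairs c | sqAddDiv c q.1 = sqAddDiv c x} =
      ({(x, y), (x, z), (y, x), (y, z), (z, x), (z, y)} : Finset (F × F)) := by
  have partner_x {t} := mul_mul_add_eq_iff_eq_or_eq (t := t) hc hsum hprod
  have partner_y {t} := mul_mul_add_eq_iff_eq_or_eq (x := y) (y := x) (z := z) (t := t) hc
    (by rw [← hsum]; ring) (by rw [← hprod]; ring)
  have partner_z {t} := mul_mul_add_eq_iff_eq_or_eq (x := z) (y := x) (z := y) (t := t) hc
    (by rw [← hsum]; ring) (by rw [← hprod]; ring)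
  ext ⟨s, t⟩
  have hfiber := congrArg (s ∈ ·) (filter_sqAddDiv_eq_of_collision hc hsum hprod)
  simp only [mem_filter, mem_erase, mem_univ, and_true, mem_insert, mem_singleton,
    eq_iff_iff] at hfiber
  have hmem : s * t * (s + t) = c ∧ sqAddDiv c s = sqAddDiv c x ↔
      s * t * (s + t) = c ∧ (s = x ∨ s = y ∨ s = z) :=
    and_congr_right fun h => by
      rw [← hfiber, and_iff_right (ne_zero_of_mul_mul_add_eq hc h)]
  simp only [mem_filter, mem_collisionPairs, mem_insert, mem_singleton, Prod.mk.injEq, hmem]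
  grind

lemma card_filter_collisionPairs_add_three {c x : F} (hc : c ≠ 0) (h3 : (3 : F) ≠ 0)
    (hx : x ≠ 0) :
    #{q ∈ collisionPairs c | sqAddDiv c q.1 = sqAddDiv c x} + 3 =
      3 * #{t ∈ univ.erase 0 | sqAddDiv c t = sqAddDiv c x} := by
  by_cases hcollision : ∃ y, x * y * (x + y) = c
  · obtain ⟨y, hy⟩ := hcollision
    have hsum : x + y + (-x - y) = 0 := by ring
    have hprod : x * y * (-x - y) = -c := by rw [← hy]; ring
    rw [filter_collisionPairs_eq_of_collision hc hsum hprod,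
      filter_sqAddDiv_eq_of_collision hc hsum hprod]
    refine card_six_pairs_add_three fun ⟨hxy, hxz⟩ => mul_ne_zero h3 hx ?_
    linear_combination hxy + hxz
  · have eq_x {t : F} (ht : t ≠ 0) (h : sqAddDiv c t = sqAddDiv c x) : t = x :=
      (((sqAddDiv_eq_sqAddDiv_iff hx ht).mp h.symm).resolve_right
        fun h => hcollision ⟨t, h⟩).symm
    have hpairs : {q ∈ collisionPairs c | sqAddDiv c q.1 = sqAddDiv c x} = ∅ := by
      refine filter_eq_empty_iff.mpr fun q hq h => hcollision ⟨q.2, ?_⟩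
      rw [mem_collisionPairs] at hq
      rwa [← eq_x (ne_zero_of_mul_mul_add_eq hc hq) h]
    have hfiber : ({t ∈ univ.erase 0 | sqAddDiv c t = sqAddDiv c x} : Finset F) = {x} := by
      ext t
      simp only [mem_filter, mem_erase, mem_univ, and_true, mem_singleton]
      refine ⟨fun ⟨ht, h⟩ => eq_x ht h, ?_⟩
      rintro rfl
      exact ⟨hx, rfl⟩
    rw [hpairs, hfiber, card_empty, card_singleton]

lemma card_collisionPairs_add {c : F} (hc : c ≠ 0) (h3 : (3 : F) ≠ 0) :
    #(collisionPairs c) + 3 * #(sqAddDivValues c) + 3 = 3 * Fintype.card F := by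
  have hmaps : ((collisionPairs c : Finset (F × F)) : Set (F × F)).MapsTo
      (fun q => sqAddDiv c q.1) (sqAddDivValues c) := fun q hq =>
    mem_image_of_mem _ <| mem_erase.mpr
      ⟨ne_zero_of_mul_mul_add_eq hc (mem_collisionPairs.mp hq), mem_univ _⟩
  have hfibers : #(collisionPairs c) + 3 * #(sqAddDivValues c) = 3 * #(univ.erase (0 : F)) := by
    calc #(collisionPairs c) + 3 * #(sqAddDivValues c)
        = ∑ b ∈ sqAddDivValues c, (#{q ∈ collisionPairs c | sqAddDiv c q.1 = b} + 3) := by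
          rw [sum_add_distrib, sum_const, smul_eq_mul, mul_comm 3,
            card_eq_sum_card_fiberwise hmaps]
      _ = ∑ b ∈ sqAddDivValues c, 3 * #{t ∈ univ.erase 0 | sqAddDiv c t = b} := by
          refine sum_congr rfl fun b hb => ?_
          obtain ⟨x, hx, rfl⟩ := mem_image.mp hb
          exact card_filter_collisionPairs_add_three hc h3 (ne_of_mem_erase hx)
      _ = 3 * #(univ.erase (0 : F)) := by
          rw [← mul_sum, sqAddDivValues, ← card_eq_sum_card_image]
  have herase := card_erase_add_one (mem_univ (0 : F))
  rw [card_univ] at herase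
  omega

lemma card_filter_mul_mul_add_eq (hF : ringChar F ≠ 2) (c : F) {x : F} (hx : x ≠ 0) :
    (#{y | x * y * (x + y) = c} : ℤ) = quadraticChar F (1 + 4 * c * x⁻¹ ^ 3) + 1 := by
  have h2 : (2 : F) ≠ 0 := Ring.two_ne_zero hF
  rw [← quadraticChar_card_sqrts hF, Nat.cast_inj]
  refine card_nbij' (fun y => 1 + 2 * y / x) (fun t => (t - 1) * x / 2) ?_ ?_ ?_ ?_
  · intro y hy
    simp only [coe_filter, mem_univ, true_and, Set.mem_ofPred_eq, Set.coe_toFinset] at hy ⊢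
    rw [← hy]
    field_simp
    ring
  · intro t ht
    simp only [coe_filter, mem_univ, true_and, Set.mem_ofPred_eq, Set.coe_toFinset] at ht ⊢
    field_simp at ht ⊢
    linear_combination ht
  · intro y _
    field_simp
    ring
  · intro t _
    field_simp
    ring

lemma card_collisionPairs (hF : ringChar F ≠ 2) {c : F} (hc : c ≠ 0) :
    (#(collisionPairs c) : ℤ) =
      Fintype.card F - 2 + ∑ s, quadraticChar F (1 + 4 * c * s ^ 3) := by
  have hsections : (#(collisionPairs c) : ℤ) = ∑ x, (#{y | x * y * (x + y) = c} : ℤ) := by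
    simp only [collisionPairs, card_filter, Fintype.sum_prod_type, Nat.cast_sum]
  have hzero : #{y : F | 0 * y * (0 + y) = c} = 0 := by
    simp [hc.symm]
  have hinv : ∑ s, quadraticChar F (1 + 4 * c * s⁻¹ ^ 3) =
      ∑ s, quadraticChar F (1 + 4 * c * s ^ 3) :=
    Equiv.sum_comp (Equiv.inv F) fun s => quadraticChar F (1 + 4 * c * s ^ 3)
  have hcompl : (#({0}ᶜ : Finset F) : ℤ) = Fintype.card F - 1 := by
    rw [card_compl, card_singleton, Nat.cast_sub Fintype.card_pos, Nat.cast_one]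
  rw [hsections, ← hinv, Fintype.sum_eq_add_sum_compl 0, Fintype.sum_eq_add_sum_compl (0 : F),
    sum_congr rfl fun x hx => card_filter_mul_mul_add_eq hF c (by simpa using hx),
    sum_add_distrib, sum_const, hzero, nsmul_one, hcompl, inv_zero, zero_pow three_ne_zero,
    mul_zero, add_zero, map_one, Nat.cast_zero]
  ring

theorem three_mul_card_sqAddDivValues (hF : ringChar F ≠ 2) (h3 : (3 : F) ≠ 0) {c d : F}
    (hd : d ≠ 0) (hcd : 4 * c = d ^ 3) :
    3 * (#(sqAddDivValues c) : ℤ) + 1 = 2 * Fintype.card F - ∑ s, quadraticChar F (1 + s ^ 3) := by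
  have hc : c ≠ 0 := by
    rintro rfl
    rw [mul_zero] at hcd
    exact pow_ne_zero 3 hd hcd.symm
  have hscale : ∑ s, quadraticChar F (1 + 4 * c * s ^ 3) = ∑ s, quadraticChar F (1 + s ^ 3) := by
    rw [← Equiv.sum_comp (Equiv.mulLeft₀ d hd) fun s => quadraticChar F (1 + s ^ 3)]
    simp only [hcd, Equiv.mulLeft₀_apply, mul_pow]
  have hvalues := card_collisionPairs_add hc h3
  have hpairs := card_collisionPairs hF hc
  rw [hscale] at hpairs
  omega

end SqAddDiv

theorem two_mul_add_eq_three_mul_card_sqAddDivValues_two {p : ℕ} [Fact p.Prime] {A B : ℤ}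
    (hAB : (p : ℤ) = A ^ 2 + 3 * B ^ 2) (hA : A % 3 = 1) :
    2 * (A + (p : ℤ)) = 3 * #(sqAddDivValues (2 : ZMod p)) + 1 := by
  have hp : p % 3 = 1 := mod_three_eq_one_of_eq_sq_add_three_mul_sq hAB hA
  have hF : ringChar (ZMod p) ≠ 2 := ringChar_zmod_ne_of_mod_three_eq_one hp (by decide)
  have h3 : (3 : ZMod p) ≠ 0 := by
    have hcoprime : Nat.Coprime 3 p := by
      rw [Nat.coprime_primes Nat.prime_three Fact.out]
      omega
    exact_mod_cast (ZMod.isUnit_iff_coprime 3 p).mpr hcoprime |>.ne_zero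
  have hcube : (4 * 2 : ZMod p) = 2 ^ 3 := by norm_num
  rw [three_mul_card_sqAddDivValues hF h3 (Ring.two_ne_zero hF) hcube,
    sum_quadraticChar_one_add_cube hAB hA, ZMod.card]
  ring

lemma card_filter_range_eq_card {n : ℕ} [NeZero n] {P : ℕ → Prop} [DecidablePred P]
    {T : Finset (ZMod n)} (h : ∀ b : ℕ, P b ↔ (b : ZMod n) ∈ T) : #{b ∈ range n | P b} = #T := by
  refine card_nbij' (fun b => (b : ZMod n)) ZMod.val ?_ ?_ ?_ ?_
  · intro b hb
    exact (h b).mp (mem_filter.mp hb).2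
  · intro b hb
    refine mem_filter.mpr ⟨mem_range.mpr (ZMod.val_lt b), (h _).mpr ?_⟩
    rwa [ZMod.natCast_zmod_val]
  · intro b hb
    exact ZMod.val_cast_of_lt (mem_range.mp (mem_filter.mp hb).1)
  · intro b _
    exact ZMod.natCast_zmod_val b

lemma exists_mem_Icc_natCast_iff {n : ℕ} [NeZero n] {Q : ZMod n → Prop} :
    (∃ x ∈ Icc 1 (n - 1), Q (x : ℕ)) ↔ ∃ x ≠ 0, Q x := by
  constructor
  · rintro ⟨x, hx, h⟩
    refine ⟨x, fun hzero => ?_, h⟩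
    have hdvd := (ZMod.natCast_eq_zero_iff x n).mp hzero
    rw [mem_Icc] at hx
    have hle := Nat.le_of_dvd hx.1 hdvd
    omega
  · rintro ⟨x, hx, h⟩
    have hlt := ZMod.val_lt x
    have hne : x.val ≠ 0 := (ZMod.val_ne_zero x).mpr hx
    refine ⟨x.val, mem_Icc.mpr (by omega), ?_⟩
    rwa [ZMod.natCast_zmod_val]

theorem stmt_17 (p : ℕ) (hp : p.Prime) (hp1 : p % 3 = 1)
    (A B : ℤ) (hpAB : (p : ℤ) = A ^ 2 + 3 * B ^ 2) (hA : A % 3 = 1) :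
    2 * (A + (p : ℤ)) = 3 * (((Finset.range p).filter (fun b : ℕ =>
      ∃ x ∈ Finset.Icc 1 (p - 1),
        (x : ℤ) ^ 3 + (2) ≡ (b : ℤ) * (x : ℤ) [ZMOD (p : ℤ)])).card : ℤ) + 1 ∧
    2 * (A + (p : ℤ)) = 3 * (((Finset.range p).filter (fun b : ℕ =>
      ∃ x ∈ Finset.Icc 1 (p - 1),
        (x : ℤ) ^ 3 + (4) ≡ (b : ℤ) * (x : ℤ) ^ 2 [ZMOD (p : ℤ)])).card : ℤ) + 1 := by
  have : Fact p.Prime := ⟨hp⟩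
  have h2 : (2 : ZMod p) ≠ 0 :=
    Ring.two_ne_zero (ringChar_zmod_ne_of_mod_three_eq_one hp1 (by decide))
  rw [two_mul_add_eq_three_mul_card_sqAddDivValues_two hpAB hA]
  constructor
  · rw [card_filter_range_eq_card (T := sqAddDivValues 2)]
    intro b
    rw [mem_sqAddDivValues, ← exists_mem_Icc_natCast_iff]
    simp only [← ZMod.intCast_eq_intCast_iff]
    push_cast
    rfl
  · rw [card_filter_range_eq_card (T := sqAddDivValues 2)]
    intro b
    rw [mem_sqAddDivValues_iff_exists_mul_sq h2, ← exists_mem_Icc_natCast_iff]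
    norm_num [← ZMod.intCast_eq_intCast_iff]
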